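/- Let m ≥ 2, N ≥ 1, let L : (ℂ^N)^m → ℂ be a symmetric m-linear form and P(z) = L(z,…,z). For a multi-index β ∈ ℕ₀^N with |β| = m-1 write C_β = (m-1)!/ (β₁!⋯β_N!) and let L(e^β, e_j) denote L evaluated at the standard basis vector e_r repeated β_r times (r = 1,…,N, in any order, by symmetry) and e_j in the last argument. Then ∑_{j=1}^N ( ∑_{β ∈ ℕ₀^N, |β|=m-1} C_β² |L(e^β, e_j)|² / ∏_{r=1}^N (β_r+1) )^{1/2} ≤ (m/(m-1))^{m-1} · sup_{z ∈ closed unit polydisc of ℂ^N} |P(z)|. -/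

import Mathlib

open Finset

/-!
For `z` and `w` in the unit polydisc, `(n + 1) * L (z, …, z, w)` is the derivative at `0` of
`l ↦ P (z + l • w)`, and Cauchy's estimate on a circle of radius `1 / n` bounds `|L (z, …, z, w)|`
by `((n + 1) / n) ^ n * sup |P|` (Harris). As `w` varies, `ℓ¹`-`ℓ∞` duality bounds
`∑ j, |L (z, …, z, e_j)|` by the same constant, and it remains to bound the weighted `ℓ²` norm of
the coefficients of a polynomial in `z` by its `L¹` norm on the torus (Helson).

In one variable this is Carleman's inequality. A polynomial factors on the disc as `u * v` with
`|u| = |v|` on the circle: a square root of each zero-free factor goes to `u` and another to `v`,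
while a zero `a` inside the disc contributes a square root of `1 - conj a * z` to both and its
Blaschke factor to `u`. Cauchy–Schwarz applied to `c_k = ∑ u_i v_{k - i}` gives
`|c_k|² / (k + 1) ≤ ∑ |u_i|² |v_{k - i}|²`, and Bessel's inequality bounds the sum over `k` by
`‖u‖₂² ‖v‖₂² = ‖u * v‖₁²`. Minkowski's inequality carries the one-variable bound to the torus,
one variable at a time.
-/

open Metric Real
open scoped ComplexConjugate Nat

section TaylorCoefficients

variable {𝕜 : Type*} [NontriviallyNormedField 𝕜]

/-- The coefficient of `(z - c) ^ k` in the Taylor expansion of `f` at `c`. -/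
noncomputable def taylorCoeff (f : 𝕜 → 𝕜) (c : 𝕜) (k : ℕ) : 𝕜 := iteratedDeriv k f c / k !

theorem taylorCoeff_congr {f g : 𝕜 → 𝕜} {c : 𝕜} (h : f =ᶠ[nhds c] g) (k : ℕ) :
    taylorCoeff f c k = taylorCoeff g c k := by
  rw [taylorCoeff, taylorCoeff, h.iteratedDeriv_eq]

theorem taylorCoeff_mul [CharZero 𝕜] {f g : 𝕜 → 𝕜} {c : 𝕜} {k : ℕ} (hf : ContDiffAt 𝕜 k f c)
    (hg : ContDiffAt 𝕜 k g c) :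
    taylorCoeff (f * g) c k =
      ∑ x ∈ antidiagonal k, taylorCoeff f c x.1 * taylorCoeff g c x.2 := by
  rw [taylorCoeff, iteratedDeriv_mul hf hg, Finset.sum_div,
    Finset.Nat.sum_antidiagonal_eq_sum_range_succ_mk]
  refine sum_congr rfl fun i hi => ?_
  have hik : i ≤ k := Nat.lt_succ_iff.1 (Finset.mem_range.1 hi)
  have hk : (k ! : 𝕜) ≠ 0 := Nat.cast_ne_zero.2 k.factorial_ne_zero
  rw [taylorCoeff, taylorCoeff, Nat.cast_choose 𝕜 hik]
  field_simp

theorem iteratedDeriv_polynomial_eval (p : Polynomial 𝕜) (k : ℕ) :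
    iteratedDeriv k p.eval = (Polynomial.derivative^[k] p).eval := by
  induction k generalizing p with
  | zero => rw [iteratedDeriv_zero, Function.iterate_zero_apply]
  | succ k ih =>
    have hderiv : deriv p.eval = p.derivative.eval := funext fun _ => p.deriv
    rw [iteratedDeriv_succ', hderiv, ih, Function.iterate_succ_apply]

theorem taylorCoeff_polynomial_eval [CharZero 𝕜] (p : Polynomial 𝕜) (c : 𝕜) (k : ℕ) :
    taylorCoeff p.eval c k = (Polynomial.taylor c p).coeff k := by
  have hk : (k ! : 𝕜) ≠ 0 := Nat.cast_ne_zero.2 k.factorial_ne_zero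
  simp only [taylorCoeff, iteratedDeriv_polynomial_eval, ← Polynomial.factorial_smul_hasseDeriv,
    Polynomial.taylor_coeff, LinearMap.smul_apply, Polynomial.eval_smul]
  rw [nsmul_eq_mul, mul_div_cancel_left₀ _ hk]

end TaylorCoefficients

section Bessel

variable {u : ℂ → ℂ} {c : ℂ} {R : ℝ}

theorem fourierCoeffOn_comp_circleMap (hu : DiffContOnCl ℂ u (ball c R)) (hR : 0 < R) (k : ℕ) :
    fourierCoeffOn two_pi_pos (fun θ : ℝ => u (circleMap c R θ)) k =
      R ^ k * taylorCoeff u c k := by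
  have hπ : (π : ℂ) ≠ 0 := Complex.ofReal_ne_zero.2 pi_ne_zero
  have hR' : (R : ℂ) ≠ 0 := Complex.ofReal_ne_zero.2 hR.ne'
  have hCauchy : taylorCoeff u c k =
      (2 * π * Complex.I)⁻¹ * ∮ z in C(c, R), (1 / (z - c) ^ (k + 1)) • u z := by
    rw [DiffContOnCl.circleIntegral_one_div_sub_center_pow_smul hR k hu, taylorCoeff, smul_eq_mul]
    field_simp
  have hfourier (θ : ℝ) : fourier (-(k : ℤ)) (θ : AddCircle (2 * π - 0)) =
      (Complex.exp (θ * Complex.I) ^ k)⁻¹ := by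
    rw [fourier_coe_apply, ← Complex.exp_nat_mul, ← Complex.exp_neg]
    congr 1
    push_cast
    field_simp
    ring
  rw [hCauchy, fourierCoeffOn_eq_integral, circleIntegral, Complex.real_smul,
    ← intervalIntegral.integral_const_mul, ← intervalIntegral.integral_const_mul,
    ← intervalIntegral.integral_const_mul]
  refine intervalIntegral.integral_congr fun θ _ => ?_
  have hexp := Complex.exp_ne_zero (θ * Complex.I)
  simp only [hfourier, deriv_circleMap, circleMap_sub_center, smul_eq_mul]
  rw [circleMap_zero]
  push_cast
  field_simp
  ring

theorem sum_sq_norm_taylorCoeff_le_circleAverage (hu : DiffContOnCl ℂ u (ball c R)) (hR : 0 < R)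
    (s : Finset ℕ) :
    ∑ k ∈ s, (R ^ k * ‖taylorCoeff u c k‖) ^ 2 ≤ circleAverage (fun z => ‖u z‖ ^ 2) c R := by
  have hmem (θ : ℝ) : circleMap c R θ ∈ closedBall c R := circleMap_mem_closedBall c hR.le θ
  obtain ⟨C, hC⟩ :=
    (isCompact_closedBall c R).exists_bound_of_continuousOn hu.continuousOn_ball
  have hcont : Continuous fun θ : ℝ => u (circleMap c R θ) :=
    hu.continuousOn_ball.comp_continuous (continuous_circleMap c R) hmem
  have hparseval := hasSum_sq_fourierCoeffOn two_pi_pos (f := fun θ : ℝ => u (circleMap c R θ))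
    (.of_bound hcont.aestronglyMeasurable C (.of_forall fun θ => hC _ (hmem θ)))
  have hbessel := sum_le_hasSum (s.map Nat.castEmbedding) (fun _ _ => sq_nonneg _) hparseval
  simpa only [Finset.sum_map, Nat.castEmbedding_apply, fourierCoeffOn_comp_circleMap hu hR,
    norm_mul, norm_pow, Complex.norm_real, norm_of_nonneg hR.le, sub_zero, circleAverage]
    using hbessel

end Bessel

section ComplexSqrt

theorem csqrt_mul_self (z : ℂ) : z.sqrt * z.sqrt = z := by
  rw [← pow_two]
  exact Complex.cpow_nat_inv_pow z two_ne_zero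

theorem diffContOnCl_csqrt : DiffContOnCl ℂ Complex.sqrt {z | 0 < z.re} := by
  refine ⟨fun z hz => ?_, fun z hz => ?_⟩
  · exact (differentiableAt_id.cpow_const (Or.inl hz)).differentiableWithinAt
  · rw [Complex.closure_setOfPred_lt_re] at hz
    exact (Complex.continuousAt_cpow_const_of_re_pos (Or.inl hz) (by norm_num)).continuousWithinAt

theorem re_one_sub_mul_pos {b z : ℂ} (hb : ‖b‖ ≤ 1) (hz : ‖z‖ < 1) : 0 < (1 - b * z).re := by
  have hbz : ‖b * z‖ < 1 := by
    rw [norm_mul]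
    exact mul_lt_one_of_nonneg_of_lt_one_right hb (norm_nonneg z) hz
  simpa using (Complex.re_le_norm (b * z)).trans_lt hbz

theorem diffContOnCl_csqrt_one_sub_mul {b : ℂ} (hb : ‖b‖ ≤ 1) :
    DiffContOnCl ℂ (fun z => (1 - b * z).sqrt) (ball 0 1) :=
  diffContOnCl_csqrt.comp (g := fun z => 1 - b * z)
    (Differentiable.diffContOnCl (by fun_prop))
    fun _ hz => re_one_sub_mul_pos hb (mem_ball_zero_iff.1 hz)

end ComplexSqrt

section BalancedFactorization

/-- `f` factors on the closed unit disc as `f = u * v`, where `u` and `v` are holomorphic in the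
disc, continuous up to the boundary, and have equal modulus on the unit circle. This
replaces the factorization of an `H¹` function into two `H²` functions of the same norm. -/
def HasBalancedFactorization (f : ℂ → ℂ) : Prop :=
  ∃ u v : ℂ → ℂ, DiffContOnCl ℂ u (ball 0 1) ∧ DiffContOnCl ℂ v (ball 0 1) ∧
    Set.EqOn f (u * v) (closedBall 0 1) ∧ ∀ z ∈ sphere (0 : ℂ) 1, ‖u z‖ = ‖v z‖

theorem norm_sub_eq_norm_one_sub_conj_mul {z : ℂ} (hz : ‖z‖ = 1) (a : ℂ) :
    ‖z - a‖ = ‖1 - conj a * z‖ := by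
  have hzz : z * conj z = 1 := by
    rw [Complex.mul_conj, Complex.normSq_eq_norm_sq, hz, one_pow, Complex.ofReal_one]
  have hfactor : z - a = z * conj (1 - conj a * z) := by
    rw [map_sub, map_one, map_mul, Complex.conj_conj]
    linear_combination a * hzz
  rw [hfactor, norm_mul, hz, one_mul, RCLike.norm_conj]

namespace HasBalancedFactorization

theorem mul {f g : ℂ → ℂ} (hf : HasBalancedFactorization f) (hg : HasBalancedFactorization g) :
    HasBalancedFactorization fun z => f z * g z := by
  obtain ⟨u, v, hu, hv, hfuv, huv⟩ := hf
  obtain ⟨u', v', hu', hv', hguv, huv'⟩ := hg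
  refine ⟨u * u', v * v', hu.smul hu', hv.smul hv', fun z hz => ?_, fun z hz => ?_⟩
  · simp only [Pi.mul_apply, hfuv hz, hguv hz, mul_mul_mul_comm]
  · simp only [Pi.mul_apply, norm_mul, huv z hz, huv' z hz]

theorem const (c : ℂ) : HasBalancedFactorization fun _ => c :=
  ⟨fun _ => c.sqrt, fun _ => c.sqrt, diffContOnCl_const, diffContOnCl_const,
    fun _ _ => (csqrt_mul_self c).symm, fun _ _ => rfl⟩

theorem one_sub_mul {b : ℂ} (hb : ‖b‖ ≤ 1) : HasBalancedFactorization fun z => 1 - b * z :=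
  ⟨_, _, diffContOnCl_csqrt_one_sub_mul hb, diffContOnCl_csqrt_one_sub_mul hb,
    fun _ _ => (csqrt_mul_self _).symm, fun _ _ => rfl⟩

theorem sub_const_of_one_le_norm {a : ℂ} (ha : 1 ≤ ‖a‖) :
    HasBalancedFactorization fun z => z - a := by
  have ha0 : a ≠ 0 := norm_pos_iff.1 (one_pos.trans_le ha)
  have hinv : ‖a⁻¹‖ ≤ 1 := by
    rw [norm_inv]
    exact inv_le_one_of_one_le₀ ha
  convert (const (-a)).mul (one_sub_mul hinv) using 1
  ext z
  field_simp
  ring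

theorem sub_const_of_norm_lt_one {a : ℂ} (ha : ‖a‖ < 1) :
    HasBalancedFactorization fun z => z - a := by
  set s : ℂ → ℂ := fun z => (1 - conj a * z).sqrt
  have hconj : ‖conj a‖ < 1 := by rwa [RCLike.norm_conj]
  have hs : DiffContOnCl ℂ s (ball 0 1) := diffContOnCl_csqrt_one_sub_mul hconj.le
  have hs0 : ∀ z ∈ closedBall (0 : ℂ) 1, s z ≠ 0 := fun z hz => by
    have hre := re_one_sub_mul_pos (mem_closedBall_zero_iff.1 hz) hconj
    rw [mul_comm] at hre
    refine left_ne_zero_of_mul (b := s z) ?_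
    rw [csqrt_mul_self]
    exact fun h => hre.ne' (by rw [h, Complex.zero_re])
  refine ⟨s⁻¹ * fun z => z - a, s, ?_, hs, fun z hz => ?_, fun z hz => ?_⟩
  · rw [← closure_ball (0 : ℂ) one_ne_zero] at hs0
    exact (hs.inv hs0).smul (differentiable_id.sub_const a).diffContOnCl
  · simp only [Pi.mul_apply, Pi.inv_apply]
    field_simp [hs0 z hz]
  · have hne := norm_ne_zero_iff.2 (hs0 z (sphere_subset_closedBall hz))
    have hnorm : ‖z - a‖ = ‖s z‖ * ‖s z‖ := by
      rw [norm_sub_eq_norm_one_sub_conj_mul (mem_sphere_zero_iff_norm.1 hz), ← norm_mul,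
        csqrt_mul_self]
    simp only [Pi.mul_apply, Pi.inv_apply, norm_mul, norm_inv, hnorm]
    field_simp

theorem sub_const (a : ℂ) : HasBalancedFactorization fun z => z - a :=
  (le_or_gt 1 ‖a‖).elim sub_const_of_one_le_norm sub_const_of_norm_lt_one

theorem polynomial_eval (p : Polynomial ℂ) : HasBalancedFactorization fun z => p.eval z := by
  have hroots (s : Multiset ℂ) : HasBalancedFactorization fun z =>
      (s.map fun a => Polynomial.X - Polynomial.C a).prod.eval z := by
    induction s using Multiset.induction_on with
    | empty => simpa using const 1
    | cons a s ih => simpa using (sub_const a).mul ih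
  rw [(IsAlgClosed.splits p).eq_prod_roots]
  simpa using (const p.leadingCoeff).mul (hroots p.roots)

end HasBalancedFactorization

end BalancedFactorization

section Carleman

theorem norm_sum_antidiagonal_mul_sq_div_le {A : Type*} [NonUnitalSeminormedRing A]
    (b c : ℕ → A) (k : ℕ) :
    ‖∑ x ∈ antidiagonal k, b x.1 * c x.2‖ ^ 2 / (k + 1) ≤
      ∑ x ∈ antidiagonal k, ‖b x.1‖ ^ 2 * ‖c x.2‖ ^ 2 := by
  rw [div_le_iff₀' (by positivity)]
  calc ‖∑ x ∈ antidiagonal k, b x.1 * c x.2‖ ^ 2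
      ≤ (∑ x ∈ antidiagonal k, ‖b x.1‖ * ‖c x.2‖) ^ 2 := by
        gcongr
        exact norm_sum_le_of_le _ fun x _ => norm_mul_le _ _
    _ ≤ #(antidiagonal k) * ∑ x ∈ antidiagonal k, (‖b x.1‖ * ‖c x.2‖) ^ 2 :=
        sq_sum_le_card_mul_sum_sq
    _ = (k + 1) * ∑ x ∈ antidiagonal k, ‖b x.1‖ ^ 2 * ‖c x.2‖ ^ 2 := by
        simp only [Finset.Nat.card_antidiagonal, Nat.cast_add_one, mul_pow]

theorem sum_range_sum_antidiagonal_le_sum_mul_sum {b c : ℕ → ℝ} (hb : 0 ≤ b) (hc : 0 ≤ c)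
    (d : ℕ) :
    ∑ k ∈ range d, ∑ x ∈ antidiagonal k, b x.1 * c x.2 ≤
      (∑ k ∈ range d, b k) * ∑ k ∈ range d, c k := by
  have hfiber : ∀ k ∈ range d,
      {x ∈ range d ×ˢ range d | x.1 + x.2 = k} = antidiagonal k := fun k hk => by
    ext x
    simp only [mem_filter, mem_product, mem_range, HasAntidiagonal.mem_antidiagonal] at hk ⊢
    omega
  rw [sum_mul_sum, ← sum_product', sum_congr rfl fun k hk => by rw [← hfiber k hk]]
  exact sum_fiberwise_le_sum_of_sum_fiber_nonneg fun k _ =>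
    sum_nonneg fun x _ => mul_nonneg (hb x.1) (hc x.2)

theorem HasBalancedFactorization.sum_norm_taylorCoeff_sq_div_le {f : ℂ → ℂ}
    (hf : HasBalancedFactorization f) (d : ℕ) :
    ∑ k ∈ range d, ‖taylorCoeff f 0 k‖ ^ 2 / (k + 1) ≤
      circleAverage (fun z => ‖f z‖) 0 1 ^ 2 := by
  obtain ⟨u, v, hu, hv, hfuv, huv⟩ := hf
  have hanalytic {g : ℂ → ℂ} (hg : DiffContOnCl ℂ g (ball 0 1)) : AnalyticAt ℂ g 0 :=
    hg.differentiableOn.analyticAt (ball_mem_nhds 0 one_pos)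
  have hconv (k : ℕ) : taylorCoeff f 0 k =
      ∑ x ∈ antidiagonal k, taylorCoeff u 0 x.1 * taylorCoeff v 0 x.2 := by
    rw [taylorCoeff_congr (hfuv.eventuallyEq_of_mem (closedBall_mem_nhds 0 one_pos)),
      taylorCoeff_mul (hanalytic hu).contDiffAt (hanalytic hv).contDiffAt]
  have hnorm : ∀ z ∈ sphere (0 : ℂ) |1|, ‖f z‖ = ‖u z‖ ^ 2 ∧ ‖f z‖ = ‖v z‖ ^ 2 := fun z hz => by
    rw [abs_one] at hz
    rw [hfuv (sphere_subset_closedBall hz), Pi.mul_apply, norm_mul, huv z hz, pow_two]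
    exact ⟨rfl, rfl⟩
  have hbessel {g : ℂ → ℂ} (hg : DiffContOnCl ℂ g (ball 0 1))
      (hfg : ∀ z ∈ sphere (0 : ℂ) |1|, ‖f z‖ = ‖g z‖ ^ 2) :
      ∑ k ∈ range d, ‖taylorCoeff g 0 k‖ ^ 2 ≤ circleAverage (fun z => ‖f z‖) 0 1 := by
    rw [circleAverage_congr_sphere hfg]
    simpa only [one_pow, one_mul] using
      sum_sq_norm_taylorCoeff_le_circleAverage hg one_pos (range d)
  calc ∑ k ∈ range d, ‖taylorCoeff f 0 k‖ ^ 2 / (k + 1)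
      ≤ ∑ k ∈ range d, ∑ x ∈ antidiagonal k,
          ‖taylorCoeff u 0 x.1‖ ^ 2 * ‖taylorCoeff v 0 x.2‖ ^ 2 := by
        simp only [hconv]
        exact sum_le_sum fun k _ => norm_sum_antidiagonal_mul_sq_div_le _ _ k
    _ ≤ (∑ k ∈ range d, ‖taylorCoeff u 0 k‖ ^ 2) * ∑ k ∈ range d, ‖taylorCoeff v 0 k‖ ^ 2 :=
        sum_range_sum_antidiagonal_le_sum_mul_sum (b := fun k => ‖taylorCoeff u 0 k‖ ^ 2)
          (c := fun k => ‖taylorCoeff v 0 k‖ ^ 2) (fun _ => sq_nonneg _) (fun _ => sq_nonneg _) d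
    _ ≤ circleAverage (fun z => ‖f z‖) 0 1 ^ 2 := by
        rw [pow_two]
        exact mul_le_mul (hbessel hu fun z hz => (hnorm z hz).1)
          (hbessel hv fun z hz => (hnorm z hz).2) (sum_nonneg fun _ _ => sq_nonneg _)
          (circleAverage_nonneg_of_nonneg fun _ _ => norm_nonneg _)

theorem sum_norm_coeff_sq_div_le_circleAverage (p : Polynomial ℂ) (d : ℕ) :
    ∑ k ∈ range d, ‖p.coeff k‖ ^ 2 / (k + 1) ≤
      circleAverage (fun z => ‖p.eval z‖) 0 1 ^ 2 := by
  have h := (HasBalancedFactorization.polynomial_eval p).sum_norm_taylorCoeff_sq_div_le d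
  simpa only [taylorCoeff_polynomial_eval, Polynomial.taylor_zero] using h

end Carleman

section Torus

open MeasureTheory

theorem circleAverage_eq_integral_toCircle {E : Type*} [NormedAddCommGroup E] [NormedSpace ℝ E]
    (f : ℂ → E) : circleAverage f 0 1 = ∫ t : UnitAddCircle, f (AddCircle.toCircle t) := by
  have hcircle (s : ℝ) :
      f (AddCircle.toCircle (s : UnitAddCircle)) = f (circleMap 0 1 (2 * π * s)) := by
    rw [AddCircle.toCircle_apply_mk, Circle.coe_exp, circleMap_zero, div_one, Complex.ofReal_one,
      one_mul]
  rw [← UnitAddCircle.intervalIntegral_preimage 0]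
  simp only [hcircle]
  rw [intervalIntegral.integral_comp_mul_left (fun θ => f (circleMap 0 1 θ)) two_pi_pos.ne',
    zero_add, mul_zero, mul_one, circleAverage]

theorem sqrt_sum_norm_sq_div_le_integral_toCircle {d : ℕ} (a : Fin d → ℂ) :
    √(∑ k, ‖a k‖ ^ 2 / (k + 1)) ≤
      ∫ t : UnitAddCircle, ‖∑ k, a k * (AddCircle.toCircle t : ℂ) ^ (k : ℕ)‖ := by
  have hcoeff (k : Fin d) : (∑ l : Fin d, Polynomial.monomial (l : ℕ) (a l)).coeff k = a k := by
    simp [Polynomial.finsetSum_coeff, Polynomial.coeff_monomial, Fin.val_inj]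
  have hcarleman :=
    sum_norm_coeff_sq_div_le_circleAverage (∑ l : Fin d, Polynomial.monomial (l : ℕ) (a l)) d
  simp only [Finset.sum_range, hcoeff, Polynomial.eval_finsetSum, Polynomial.eval_monomial,
    circleAverage_eq_integral_toCircle fun z => ‖∑ k, a k * z ^ (k : ℕ)‖] at hcarleman
  exact sqrt_le_iff.2 ⟨integral_nonneg fun _ => norm_nonneg _, hcarleman⟩

variable {Ω ι : Type*} [MeasurableSpace Ω] {μ : Measure Ω} [Fintype ι]

theorem sqrt_sum_integral_sq_le {F : ι → Ω → ℝ} (hF : ∀ i, Integrable (F i) μ) :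
    √(∑ i, (∫ x, F i x ∂μ) ^ 2) ≤ ∫ x, √(∑ i, F i x ^ 2) ∂μ := by
  let G : Ω → EuclideanSpace ℝ ι := fun x => WithLp.toLp 2 fun i => F i x
  have hG : Integrable G μ := .of_eval_piLp hF
  calc √(∑ i, (∫ x, F i x ∂μ) ^ 2) = ‖∫ x, G x ∂μ‖ := by
        rw [EuclideanSpace.norm_eq]
        simp only [eval_integral_piLp fun i => hG.eval_piLp i, norm_eq_abs, sq_abs, G]
    _ ≤ ∫ x, ‖G x‖ ∂μ := norm_integral_le_integral_norm G
    _ = ∫ x, √(∑ i, F i x ^ 2) ∂μ := by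
        simp only [EuclideanSpace.norm_eq, norm_eq_abs, sq_abs, G]

section Fubini

variable [SigmaFinite μ] {N : ℕ} {E : Type*} [NormedAddCommGroup E] {F : (Fin (N + 1) → Ω) → E}

theorem coe_piFinSuccAbove_zero_symm :
    ⇑(MeasurableEquiv.piFinSuccAbove (fun _ : Fin (N + 1) => Ω) 0).symm =
      fun p => Fin.cons p.1 p.2 := by
  ext p
  simp [Fin.insertNthEquiv]

theorem measurePreserving_cons :
    MeasurePreserving (fun p : Ω × (Fin N → Ω) => (Fin.cons p.1 p.2 : Fin (N + 1) → Ω))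
      (μ.prod (Measure.pi fun _ => μ)) (Measure.pi fun _ => μ) := by
  rw [← coe_piFinSuccAbove_zero_symm]
  exact (measurePreserving_piFinSuccAbove (fun _ => μ) 0).symm

theorem measurableEmbedding_cons :
    MeasurableEmbedding fun p : Ω × (Fin N → Ω) => (Fin.cons p.1 p.2 : Fin (N + 1) → Ω) := by
  rw [← coe_piFinSuccAbove_zero_symm]
  exact MeasurableEquiv.measurableEmbedding _

theorem integrable_comp_cons (hF : Integrable F (Measure.pi fun _ => μ)) :
    Integrable (fun p : Ω × (Fin N → Ω) => F (Fin.cons p.1 p.2))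
      (μ.prod (Measure.pi fun _ => μ)) :=
  measurePreserving_cons.integrable_comp_of_integrable hF

theorem integral_integral_cons [NormedSpace ℝ E] (hF : Integrable F (Measure.pi fun _ => μ)) :
    ∫ x, ∫ y, F (Fin.cons x y) ∂(Measure.pi fun _ => μ) ∂μ =
      ∫ x, F x ∂(Measure.pi fun _ => μ) := by
  rw [← measurePreserving_cons.integral_comp measurableEmbedding_cons]
  exact integral_integral (integrable_comp_cons hF)

end Fubini

theorem sum_univ_fin_succ_pi {K M : Type*} [Fintype K] [AddCommMonoid M] {N : ℕ}
    (g : (Fin (N + 1) → K) → M) : ∑ β, g β = ∑ β : Fin N → K, ∑ k, g (Fin.cons k β) := by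
  rw [← (Fin.consEquiv fun _ => K).sum_comp, Fintype.sum_prod_type_right]
  rfl

theorem sqrt_sum_norm_sq_le_integral_pi {A K : Type*} [NormedCommRing A] [Fintype K]
    [SigmaFinite μ] {f : K → Ω → A} (hf : ∀ k, Integrable (f k) μ)
    (h : ∀ a : K → A, √(∑ k, ‖a k‖ ^ 2) ≤ ∫ x, ‖∑ k, a k * f k x‖ ∂μ) {N : ℕ}
    (c : (Fin N → K) → A) :
    √(∑ β, ‖c β‖ ^ 2) ≤
      ∫ x : Fin N → Ω, ‖∑ β, c β * ∏ i, f (β i) (x i)‖ ∂(Measure.pi fun _ => μ) := by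
  induction N with
  | zero => simp [measureReal_def]
  | succ N ih =>
    let P : (Fin (N + 1) → Ω) → A := fun x => ∑ β, c β * ∏ i, f (β i) (x i)
    let S : (Fin N → K) → Ω → A := fun β x => ∑ k, c (Fin.cons k β) * f k x
    have hP : Integrable (fun x => ‖P x‖) (Measure.pi fun _ => μ) :=
      (integrable_finsetSum _ fun β _ =>
        (Integrable.fintype_prod fun i => hf (β i)).const_mul (c β)).norm
    have hS (β : Fin N → K) : Integrable (fun x => ‖S β x‖) μ :=
      (integrable_finsetSum _ fun k _ => (hf k).const_mul _).norm
    have hsplit (x : Ω) (y : Fin N → Ω) :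
        P (Fin.cons x y) = ∑ β, S β x * ∏ i, f (β i) (y i) := by
      simp only [P, S, sum_univ_fin_succ_pi, sum_mul, Fin.prod_univ_succ, Fin.cons_zero,
        Fin.cons_succ, mul_assoc]
    calc √(∑ β, ‖c β‖ ^ 2)
        = √(∑ β, √(∑ k, ‖c (Fin.cons k β)‖ ^ 2) ^ 2) := by
          simp only [sum_univ_fin_succ_pi, sq_sqrt (sum_nonneg fun _ _ => sq_nonneg _)]
      _ ≤ √(∑ β, (∫ x, ‖S β x‖ ∂μ) ^ 2) := by
          gcongr with β
          exact h fun k => c (Fin.cons k β)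
      _ ≤ ∫ x, √(∑ β, ‖S β x‖ ^ 2) ∂μ := sqrt_sum_integral_sq_le hS
      _ ≤ ∫ x, ∫ y, ‖P (Fin.cons x y)‖ ∂(Measure.pi fun _ => μ) ∂μ := by
          refine integral_mono_of_nonneg (.of_forall fun _ => sqrt_nonneg _)
            (integrable_comp_cons hP).integral_prod_left (.of_forall fun x => ?_)
          simp only [hsplit]
          exact ih fun β => S β x
      _ = ∫ x, ‖P x‖ ∂(Measure.pi fun _ => μ) := integral_integral_cons hP

end Torus

section Helson

open AddCircle MeasureTheory

variable {N : ℕ}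

theorem sum_eq_sum_fin_pi_ite {M : Type*} [AddCommMonoid M] {B : Finset (Fin N → ℕ)} {d : ℕ}
    (hB : ∀ β ∈ B, ∀ i, β i < d) (g : (Fin N → ℕ) → M) :
    ∑ β ∈ B, g β =
      ∑ β : Fin N → Fin d, if (fun i => (β i : ℕ)) ∈ B then g fun i => β i else 0 := by
  rw [← sum_filter]
  refine (sum_bij (fun β _ i => (β i : ℕ)) (fun β hβ => (mem_filter.1 hβ).2)
    (fun β _ β' _ h => funext fun i => Fin.ext (congrFun h i))
    (fun β hβ => ⟨fun i => ⟨β i, hB β hβ i⟩, ?_, rfl⟩) fun _ _ => rfl).symm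
  exact mem_filter.2 ⟨mem_univ _, hβ⟩

theorem sqrt_sum_pi_fin_div_le_integral {d : ℕ} (c : (Fin N → Fin d) → ℂ) :
    √(∑ β, ‖c β‖ ^ 2 / ∏ i, ((β i : ℝ) + 1)) ≤
      ∫ t : UnitAddTorus (Fin N), ‖∑ β, c β * ∏ i, (toCircle (t i) : ℂ) ^ (β i : ℕ)‖ := by
  let w : Fin d → ℝ := fun k => √(k + 1)
  have hw (k : Fin d) : w k ≠ 0 := (sqrt_pos.2 (Nat.cast_add_one_pos _)).ne'
  have hw_sq (k : Fin d) : w k ^ 2 = k + 1 := sq_sqrt (Nat.cast_add_one_pos _).le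
  have hone (a : Fin d → ℂ) : √(∑ k, ‖a k‖ ^ 2) ≤
      ∫ t : UnitAddCircle, ‖∑ k, a k * (w k * (toCircle t : ℂ) ^ (k : ℕ))‖ := by
    have hcarleman := sqrt_sum_norm_sq_div_le_integral_toCircle fun k => a k * w k
    simpa only [norm_mul, Complex.norm_real, norm_eq_abs, mul_pow, sq_abs, hw_sq, mul_assoc,
      mul_div_cancel_right₀ _ (Nat.cast_add_one_ne_zero (R := ℝ) _)] using hcarleman
  have hcont (k : Fin d) : Continuous fun t : UnitAddCircle =>
      (w k * (toCircle t : ℂ) ^ (k : ℕ) : ℂ) := by fun_prop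
  have htensor := sqrt_sum_norm_sq_le_integral_pi
    (fun k => (hcont k).integrable_of_hasCompactSupport (.of_compactSpace _)) hone
    fun β : Fin N → Fin d => c β / ∏ i, (w (β i) : ℂ)
  have hcancel (β : Fin N → Fin d) (t : UnitAddTorus (Fin N)) :
      c β / (∏ i, (w (β i) : ℂ)) * ∏ i, (w (β i) * (toCircle (t i) : ℂ) ^ (β i : ℕ)) =
        c β * ∏ i, (toCircle (t i) : ℂ) ^ (β i : ℕ) := by
    rw [prod_mul_distrib, ← mul_assoc, div_mul_cancel₀]
    exact prod_ne_zero_iff.2 fun i _ => Complex.ofReal_ne_zero.2 (hw _)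
  simpa only [hcancel, norm_div, norm_prod, Complex.norm_real, norm_eq_abs, div_pow, ← prod_pow,
    sq_abs, hw_sq, volume_pi] using htensor

theorem helson_inequality (B : Finset (Fin N → ℕ)) (c : (Fin N → ℕ) → ℂ) :
    √(∑ β ∈ B, ‖c β‖ ^ 2 / ∏ i, ((β i : ℝ) + 1)) ≤
      ∫ t : UnitAddTorus (Fin N), ‖∑ β ∈ B, c β * ∏ i, (toCircle (t i) : ℂ) ^ β i‖ := by
  let d : ℕ := B.sup (fun β => univ.sup β) + 1
  have hB : ∀ β ∈ B, ∀ i, β i < d := fun β hβ i =>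
    Nat.lt_succ_of_le ((le_sup (mem_univ i)).trans (le_sup (f := fun β => univ.sup β) hβ))
  have hbox := sqrt_sum_pi_fin_div_le_integral fun β : Fin N → Fin d =>
    if (fun i => (β i : ℕ)) ∈ B then c fun i => β i else 0
  simp only [sum_eq_sum_fin_pi_ite hB]
  convert hbox using 4 with β _ t
  · split_ifs <;> simp
  · simp only [ite_mul, zero_mul]

theorem sum_sqrt_le_of_forall_torus {J : Type*} [Fintype J] (B : Finset (Fin N → ℕ))
    (c : J → (Fin N → ℕ) → ℂ) {M : ℝ}
    (hM : ∀ z : Fin N → ℂ, (∀ i, ‖z i‖ = 1) → ∑ j, ‖∑ β ∈ B, c j β * ∏ i, z i ^ β i‖ ≤ M) :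
    ∑ j, √(∑ β ∈ B, ‖c j β‖ ^ 2 / ∏ i, ((β i : ℝ) + 1)) ≤ M := by
  have : IsProbabilityMeasure (volume : Measure UnitAddCircle) := ⟨UnitAddCircle.measure_univ⟩
  let F : J → UnitAddTorus (Fin N) → ℝ := fun j t =>
    ‖∑ β ∈ B, c j β * ∏ i, (toCircle (t i) : ℂ) ^ β i‖
  have hF (j : J) : Continuous (F j) := by fun_prop
  have hint (j : J) : Integrable (F j) :=
    (hF j).integrable_of_hasCompactSupport (.of_compactSpace _)
  calc ∑ j, √(∑ β ∈ B, ‖c j β‖ ^ 2 / ∏ i, ((β i : ℝ) + 1))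
      ≤ ∑ j, ∫ t, F j t := sum_le_sum fun j _ => helson_inequality B (c j)
    _ = ∫ t, ∑ j, F j t := (integral_finsetSum _ fun j _ => hint j).symm
    _ ≤ ∫ _ : UnitAddTorus (Fin N), M :=
        integral_mono (integrable_finsetSum _ fun j _ => hint j) (integrable_const M) fun t =>
          hM (fun i => toCircle (t i)) fun i => Circle.norm_coe _
    _ = M := by rw [integral_const, probReal_univ, one_smul]

end Helson

section Harris

variable {E F : Type*} {n : ℕ}

theorem update_last_const_eq_snoc (z w : E) :
    Function.update (fun _ => z) (Fin.last n) w = (Fin.snoc (fun _ => z) w : Fin (n + 1) → E) := by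
  conv_lhs => rw [← Fin.snoc_init_self (α := fun _ => E) fun _ => z]
  exact Fin.update_snoc_last ..

theorem apply_update_const_eq_apply_snoc {f : (Fin (n + 1) → E) → F}
    (hf : ∀ (σ : Equiv.Perm (Fin (n + 1))) x, f (x ∘ σ) = f x) (z w : E) (i : Fin (n + 1)) :
    f (Function.update (fun _ => z) i w) = f (Fin.snoc (fun _ => z) w) := by
  rw [← hf (Equiv.swap i (Fin.last n)) (Fin.snoc (fun _ => z) w), ← update_last_const_eq_snoc,
    Function.update_comp_equiv, Equiv.symm_swap, Equiv.swap_apply_right]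
  rfl

variable [NormedAddCommGroup E] [NormedSpace ℂ E] [NormedAddCommGroup F] [NormedSpace ℂ F]

theorem hasDerivAt_apply_const_add_smul
    {f : ContinuousMultilinearMap ℂ (fun _ : Fin (n + 1) => E) F}
    (hf : ∀ (σ : Equiv.Perm (Fin (n + 1))) x, f (x ∘ σ) = f x) (z w : E) :
    HasDerivAt (fun l : ℂ => f fun _ => z + l • w)
      ((n + 1 : ℂ) • f (Fin.snoc (fun _ => z) w)) 0 := by
  have hline : HasDerivAt (fun (l : ℂ) (_ : Fin (n + 1)) => z + l • w) (fun _ => w) 0 :=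
    hasDerivAt_pi.2 fun _ => by simpa using ((hasDerivAt_id (0 : ℂ)).smul_const w).const_add z
  have hderiv := (f.hasFDerivAt (x := fun _ => z + (0 : ℂ) • w)).comp_hasDerivAt 0 hline
  rwa [zero_smul, add_zero, f.linearDeriv_apply,
    sum_congr rfl fun i _ => apply_update_const_eq_apply_snoc hf z w i, sum_const, card_univ,
    Fintype.card_fin, ← Nat.cast_smul_eq_nsmul ℂ, Nat.cast_succ] at hderiv

theorem norm_apply_const_le_pow_mul {f : ContinuousMultilinearMap ℂ (fun _ : Fin n => E) F}
    {M : ℝ} (hM : ∀ x, ‖x‖ ≤ 1 → ‖f fun _ => x‖ ≤ M) {q : ℝ} (hq : 0 < q) {x : E}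
    (hx : ‖x‖ ≤ q) : ‖f fun _ => x‖ ≤ q ^ n * M := by
  have hqx : ‖((q : ℂ)⁻¹) • x‖ ≤ 1 := by
    rw [norm_smul, norm_inv, Complex.norm_of_nonneg hq.le]
    exact inv_mul_le_one_of_le₀ hx hq.le
  calc ‖f fun _ => x‖ = ‖f fun _ => (q : ℂ) • (q : ℂ)⁻¹ • x‖ := by
        simp only [smul_inv_smul₀ (Complex.ofReal_ne_zero.2 hq.ne')]
    _ = q ^ n * ‖f fun _ => (q : ℂ)⁻¹ • x‖ := by
        rw [f.map_smul_univ (fun _ => (q : ℂ)) fun _ => (q : ℂ)⁻¹ • x, norm_smul, prod_const,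
          card_univ, Fintype.card_fin, norm_pow, Complex.norm_of_nonneg hq.le]
    _ ≤ q ^ n * M := by gcongr; exact hM _ hqx

-- The radius `1 / n` minimises the Cauchy bound `(1 + r) ^ (n + 1) / r` for the derivative at `0`
-- of `l ↦ f (z + l • w, …, z + l • w)`.
theorem harris_polarization_inequality
    {f : ContinuousMultilinearMap ℂ (fun _ : Fin (n + 1) => E) F} (hn : n ≠ 0)
    (hf : ∀ (σ : Equiv.Perm (Fin (n + 1))) x, f (x ∘ σ) = f x)
    {M : ℝ} (hM : ∀ x, ‖x‖ ≤ 1 → ‖f fun _ => x‖ ≤ M) {z w : E} (hz : ‖z‖ ≤ 1) (hw : ‖w‖ ≤ 1) :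
    ‖f (Fin.snoc (fun _ => z) w)‖ ≤ ((n + 1 : ℝ) / n) ^ n * M := by
  have hn_pos : (0 : ℝ) < n := Nat.cast_pos.2 hn.bot_lt
  have hsphere : ∀ l ∈ sphere (0 : ℂ) (1 / n),
      ‖f fun _ => z + l • w‖ ≤ ((n + 1 : ℝ) / n) ^ (n + 1) * M := fun l hl =>
    norm_apply_const_le_pow_mul hM (by positivity) <| calc
      ‖z + l • w‖ ≤ ‖z‖ + ‖l‖ * ‖w‖ := (norm_add_le _ _).trans_eq (by rw [norm_smul])
      _ ≤ 1 + 1 / n * 1 := by rw [mem_sphere_zero_iff_norm.1 hl]; gcongr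
      _ = (n + 1) / n := by field_simp
  have hdiff : Differentiable ℂ fun l : ℂ => f fun _ => z + l • w :=
    fun l => (f.hasFDerivAt (x := fun _ => z + l • w)).differentiableAt.comp l (by fun_prop)
  have hcauchy := Complex.norm_deriv_le_of_forall_mem_sphere_norm_le
    (one_div_pos.2 hn_pos) hdiff.diffContOnCl hsphere
  rw [(hasDerivAt_apply_const_add_smul hf z w).deriv, norm_smul, ← Nat.cast_succ,
    Complex.norm_natCast, Nat.cast_succ] at hcauchy
  refine le_of_mul_le_mul_left (hcauchy.trans_eq ?_) (by positivity : (0 : ℝ) < n + 1)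
  rw [pow_succ]
  field_simp

end Harris

section Duality

theorem sum_norm_apply_single_le {𝕜 ι : Type*} [RCLike 𝕜] [Fintype ι] [DecidableEq ι]
    (g : (ι → 𝕜) →ₗ[𝕜] 𝕜) {C : ℝ} (hg : ∀ w, ‖w‖ ≤ 1 → ‖g w‖ ≤ C) :
    ∑ j, ‖g (Pi.single j 1)‖ ≤ C := by
  choose u hu_norm hu using fun j => RCLike.exists_norm_eq_mul_self (g (Pi.single j 1))
  have hgu : g u = ((∑ j, ‖g (Pi.single j 1)‖ : ℝ) : 𝕜) := by
    rw [pi_eq_sum_univ' u, map_sum, RCLike.ofReal_sum]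
    exact sum_congr rfl fun j _ => by rw [map_smul, smul_eq_mul, hu]
  calc ∑ j, ‖g (Pi.single j 1)‖ = ‖g u‖ := by
        rw [hgu, RCLike.norm_of_nonneg (sum_nonneg fun _ _ => norm_nonneg _)]
    _ ≤ C := hg u ((pi_norm_le_iff_of_nonneg zero_le_one).2 fun j => (hu_norm j).le)

end Duality

section MultiIndex

variable {ι R : Type*} {n : ℕ}

/-- The multi-index `β` of a tuple of indices: `β r` counts the occurrences of `r`, so that the
monomial `z (t 0) * ⋯ * z (t (n - 1))` is `z ^ β`. -/
def multiIndex [DecidableEq ι] (t : Fin n → ι) (r : ι) : ℕ := #{l | t l = r}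

theorem sum_multiIndex [Fintype ι] [DecidableEq ι] (t : Fin n → ι) : ∑ r, multiIndex t r = n :=
  (card_eq_sum_card_fiberwise fun l _ => mem_univ (t l)).symm.trans (card_fin n)

theorem prod_comp_eq_prod_pow_multiIndex [Fintype ι] [DecidableEq ι] [CommMonoid R]
    (t : Fin n → ι) (z : ι → R) : ∏ l, z (t l) = ∏ r, z r ^ multiIndex t r := by
  simp only [← prod_fiberwise' univ t z, prod_const, multiIndex]

theorem card_multiIndex_eq [Fintype ι] [DecidableEq ι] {β : ι → ℕ} (hβ : ∑ r, β r = n) :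
    #{t : Fin n → ι | multiIndex t = β} = Nat.multinomial univ β := by
  let b : ι →₀ ℕ := Finsupp.equivFunOnFinite.symm β
  have hcoeff (t : Fin n → ι) : MvPolynomial.coeff b (∏ l, (MvPolynomial.X (t l))) =
      if multiIndex t = β then 1 else 0 := by
    rw [prod_comp_eq_prod_pow_multiIndex t (MvPolynomial.X (R := ℕ)),
      MvPolynomial.coeff_prod_X_pow]
    simp only [Finsupp.ext_iff, funext_iff, b, Finsupp.equivFunOnFinite_symm_apply_apply,
      Finsupp.indicator_apply, mem_univ, dite_true, eq_comm]
  have hmultinomial := MvPolynomial.coeff_sum_X_pow_of_fintype (R := ℕ) b n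
  rw [if_pos ((b.sum_fintype _ fun _ => rfl).trans hβ), sum_pow', MvPolynomial.coeff_sum,
    Fintype.piFinset_univ, sum_congr rfl fun t _ => hcoeff t, ← card_filter] at hmultinomial
  exact hmultinomial.trans (Finsupp.multinomial_of_support_subset (subset_univ _)).symm

theorem cast_multinomial_eq_div [Fintype ι] (β : ι → ℕ) :
    (Nat.multinomial univ β : ℝ) = (∑ r, β r)! / ∏ r, ((β r)! : ℝ) := by
  rw [eq_div_iff (by positivity), ← Nat.multinomial_spec]
  push_cast
  ring

section Multilinear

variable [CommSemiring R]

theorem multilinearMap_apply_eq_sum_prod_mul_single {κ : Type*} [Fintype κ] [DecidableEq κ]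
    [Fintype ι] [DecidableEq ι] (L : MultilinearMap R (fun _ : κ => ι → R) R) (z : κ → ι → R) :
    L z = ∑ t : κ → ι, (∏ i, z i (t i)) * L fun i => Pi.single (t i) 1 := by
  conv_lhs => rw [show z = fun i => ∑ r, z i r • Pi.single r 1 from
    funext fun i => pi_eq_sum_univ' (z i), L.map_sum]
  exact sum_congr rfl fun t _ =>
    L.map_smul_univ (fun i => z i (t i)) fun i => Pi.single (t i) 1

theorem multilinearMap_apply_const_eq_sum_piAntidiag [Fintype ι] [DecidableEq ι]
    (L : MultilinearMap R (fun _ : Fin n => ι → R) R) {a : (ι → ℕ) → R}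
    (ha : ∀ t, L (fun l => Pi.single (t l) 1) = a (multiIndex t)) (z : ι → R) :
    (L fun _ => z) =
      ∑ β ∈ piAntidiag univ n, Nat.multinomial univ β * a β * ∏ r, z r ^ β r := by
  have hmaps : ∀ t ∈ (univ : Finset (Fin n → ι)), multiIndex t ∈ piAntidiag univ n := fun t _ =>
    mem_piAntidiag.2 ⟨sum_multiIndex t, fun r _ => mem_univ r⟩
  calc (L fun _ => z) = ∑ t : Fin n → ι, (∏ r, z r ^ multiIndex t r) * a (multiIndex t) := by
        rw [multilinearMap_apply_eq_sum_prod_mul_single]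
        simp only [ha, prod_comp_eq_prod_pow_multiIndex]
    _ = ∑ β ∈ piAntidiag univ n, #{t : Fin n → ι | multiIndex t = β} •
          ((∏ r, z r ^ β r) * a β) := by
        rw [← sum_fiberwise_of_maps_to' hmaps fun β => (∏ r, z r ^ β r) * a β]
        simp only [sum_const]
    _ = _ := sum_congr rfl fun β hβ => by
        rw [card_multiIndex_eq (mem_piAntidiag.1 hβ).1, nsmul_eq_mul, mul_assoc, mul_comm (a β)]

theorem continuous_multilinearMap_pi {κ : Type*} [Finite κ] [Finite ι] [TopologicalSpace R]
    [IsTopologicalSemiring R] (L : MultilinearMap R (fun _ : κ => ι → R) R) : Continuous L := by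
  classical
  cases nonempty_fintype κ
  cases nonempty_fintype ι
  rw [funext (multilinearMap_apply_eq_sum_prod_mul_single L)]
  fun_prop

end Multilinear

end MultiIndex

section Polydisc

theorem le_biSup_of_isCompact {X : Type*} [TopologicalSpace X] {s : Set X} (hs : IsCompact s)
    {f : X → ℝ} (hf : ContinuousOn f s) {x : X} (hx : x ∈ s) : f x ≤ ⨆ y ∈ s, f y := by
  refine le_ciSup₂ (f := fun y (_ : y ∈ s) => f y) ((hs.bddAbove_image hf).mono ?_) x hx
  exact Set.iUnion_subset fun y => Set.range_subset_iff.2 fun hy => Set.mem_image_of_mem f hy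

theorem norm_apply_const_le_iSup_polydisc {ι : Type*} [Fintype ι] {n : ℕ}
    (L : MultilinearMap ℂ (fun _ : Fin n => ι → ℂ) ℂ) {x : ι → ℂ} (hx : ‖x‖ ≤ 1) :
    ‖L fun _ => x‖ ≤ ⨆ z ∈ {z : ι → ℂ | ∀ j, ‖z j‖ ≤ 1}, ‖L fun _ => z‖ := by
  have hpolydisc : {z : ι → ℂ | ∀ j, ‖z j‖ ≤ 1} = closedBall 0 1 := Set.ext fun z => by
    rw [mem_closedBall_zero_iff, pi_norm_le_iff_of_nonneg zero_le_one, Set.mem_ofPred_eq]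
  have hcont : Continuous fun z => ‖L fun _ => z‖ :=
    ((continuous_multilinearMap_pi L).comp (by fun_prop)).norm
  rw [hpolydisc]
  exact le_biSup_of_isCompact (isCompact_closedBall 0 1) hcont.continuousOn
    (mem_closedBall_zero_iff.2 hx)

theorem sum_norm_apply_snoc_single_le {ι : Type*} [Fintype ι] [DecidableEq ι] {n : ℕ}
    (hn : n ≠ 0) {L : MultilinearMap ℂ (fun _ : Fin (n + 1) => ι → ℂ) ℂ}
    (hL : ∀ (σ : Equiv.Perm (Fin (n + 1))) x, L (x ∘ σ) = L x) {M : ℝ}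
    (hM : ∀ x, ‖x‖ ≤ 1 → ‖L fun _ => x‖ ≤ M) {z : ι → ℂ} (hz : ‖z‖ ≤ 1) :
    ∑ j, ‖L (Fin.snoc (fun _ => z) (Pi.single j 1))‖ ≤ ((n + 1 : ℝ) / n) ^ n * M :=
  sum_norm_apply_single_le (L.curryRight fun _ => z) fun _ hw =>
    harris_polarization_inequality (f := ⟨L, continuous_multilinearMap_pi L⟩) hn hL hM hz hw

end Polydisc

/-- **Key intermediate estimate** in the proof of the main theorem. Let `m = n+1 ≥ 2`,
`L` a symmetric `m`-linear form on `ℂ^N`, `P(z) = L(z,…,z)`. For a multi-index `β`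
with `|β| = m-1 = n` let `C_β = n!/(β₁!⋯β_N!)` and let `A β j = L(e^β, e_j)` denote
`L` evaluated at the basis vector `e_r` repeated `β_r` times and `e_j` in the last
argument (encoded by the hypothesis `hA`, using any tuple `t` whose multi-index is `β`).
Then `∑_j (∑_{|β|=n} C_β² |L(e^β,e_j)|² / ∏_r (β_r+1))^{1/2}
  ≤ (m/(m-1))^{m-1} · sup_{polydisc} |P|`. -/
theorem key_intermediate_estimate (n N : ℕ) (hn : 1 ≤ n) (hN : 1 ≤ N)
    (L : MultilinearMap ℂ (fun _ : Fin (n + 1) => Fin N → ℂ) ℂ)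
    (hsym : ∀ (σ : Equiv.Perm (Fin (n + 1))) (z : Fin (n + 1) → Fin N → ℂ),
      L (z ∘ σ) = L z)
    (A : (Fin N → ℕ) → Fin N → ℂ)
    (hA : ∀ (β : Fin N → ℕ) (j : Fin N) (t : Fin n → Fin N),
      (∀ r, (Finset.univ.filter fun l => t l = r).card = β r) →
      A β j = L (Fin.snoc (fun l => Pi.single (t l) (1 : ℂ)) (Pi.single j 1))) :
    ∑ j : Fin N, Real.sqrt (∑ β ∈ Finset.Nat.antidiagonalTuple N n,
        ((n.factorial : ℝ) / ∏ r, ((β r).factorial : ℝ)) ^ 2 *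
          ‖A β j‖ ^ 2 / ∏ r, ((β r : ℝ) + 1))
      ≤ (((n : ℝ) + 1) / n) ^ n *
        ⨆ z ∈ {z : Fin N → ℂ | ∀ j, ‖z j‖ ≤ 1},
          ‖(L fun _ => z)‖ := by
  have hexpand (z : Fin N → ℂ) (j : Fin N) : ∑ β ∈ Finset.Nat.antidiagonalTuple N n,
      Nat.multinomial univ β * A β j * ∏ r, z r ^ β r =
        L (Fin.snoc (fun _ => z) (Pi.single j 1)) := by
    rw [← piAntidiag_univ_fin_eq_antidiagonalTuple]
    exact (multilinearMap_apply_const_eq_sum_piAntidiag (a := fun β => A β j)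
      ((LinearMap.applyₗ (Pi.single j 1)).compMultilinearMap L.curryRight)
      (fun t => (hA (multiIndex t) j t fun _ => rfl).symm) z).symm
  have hbound : ∑ j, √(∑ β ∈ Finset.Nat.antidiagonalTuple N n,
      ‖(Nat.multinomial univ β * A β j : ℂ)‖ ^ 2 / ∏ r, ((β r : ℝ) + 1)) ≤ _ :=
    sum_sqrt_le_of_forall_torus _ (fun j β => Nat.multinomial univ β * A β j) fun z hz => by
      simp only [hexpand]
      exact sum_norm_apply_snoc_single_le (Nat.one_le_iff_ne_zero.1 hn) hsym
        (fun _ => norm_apply_const_le_iSup_polydisc L)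
        ((pi_norm_le_iff_of_nonneg zero_le_one).2 fun j => (hz j).le)
  convert hbound using 5 with j _ β hβ
  rw [norm_mul, Complex.norm_natCast, mul_pow, cast_multinomial_eq_div,
    Finset.Nat.mem_antidiagonalTuple.1 hβ]
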